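/- Let k ≥ 3 be an integer. For every ε > 0 there exists a constant A > 0 such that for all real X ≥ 2, the series ∑_{n≥1} P_k(n) n^{k/2−1} e^{−n/X} converges absolutely and |∑_{n≥1} P_k(n) n^{k/2−1} e^{−n/X} − (π^{k/2} Γ(k−1)/(2 Γ(k/2))) X^{k−1} − (π^{k/2} Γ(k−2)/(12 Γ(k/2 − 1))) X^{k−2}| ≤ A X^{k−3+ε}. -/

import Mathlib

open scoped Real

/-- `rk k m` = number of ways to write `m` as a sum of `k` integer squares. -/
noncomputable def rk (k m : ℕ) : ℕ :=
  Nat.card {v : Fin k → ℤ // (∑ i, (v i) ^ 2) = (m : ℤ)}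

/-- `Sk k t` = number of lattice points of `ℤ^k` in the closed ball of radius `√t`. -/
noncomputable def Sk (k : ℕ) (t : ℝ) : ℕ :=
  Nat.card {v : Fin k → ℤ // (∑ i, ((v i : ℝ)) ^ 2) ≤ t}

/-- `Vk k` = volume of the unit ball in `ℝ^k`. -/
noncomputable def Vk (k : ℕ) : ℝ :=
  Real.pi ^ ((k : ℝ) / 2) / Real.Gamma ((k : ℝ) / 2 + 1)

/-- `Pk k t` = lattice point discrepancy of the `k`-dimensional ball of radius `√t`. -/
noncomputable def Pk (k : ℕ) (t : ℝ) : ℝ :=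
  (Sk k t : ℝ) - Vk k * t ^ ((k : ℝ) / 2)

/-- Value of the (analytically continued) Riemann zeta function at a real point. -/
noncomputable def rzeta (x : ℝ) : ℝ := (riemannZeta (x : ℂ)).re

/-- The Riemann zeta function with its 2-factor removed. -/
noncomputable def rzeta2 (x : ℝ) : ℝ := (1 - (2 : ℝ) ^ (-x)) * rzeta x

/-- The constant `C_k` for `k ≥ 4`. -/
noncomputable def Ck (k : ℕ) : ℝ :=
  ((k : ℝ) ^ 2 / 24) * (Vk k) ^ 2 +
    Real.pi ^ (k : ℝ) * rzeta ((k : ℝ) - 2) * (1 + (2 : ℝ) ^ ((3 : ℝ) - (k : ℝ))) /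
      (12 * (Real.Gamma ((k : ℝ) / 2)) ^ 2 * rzeta2 (k : ℝ))

open Filter Topology MeasureTheory Set

lemma summable_norm_prod_and_tsum_prod {ι : Type*} (f : ι → ℂ) (hf : Summable fun i => ‖f i‖)
    (k : ℕ) : (Summable fun v : Fin k → ι => ‖∏ i, f (v i)‖) ∧
      ∑' v : Fin k → ι, ∏ i, f (v i) = (∑' i, f i) ^ k := by
  induction k with
  | zero => exact ⟨(hasSum_fintype _).summable, by simp [tsum_fintype]⟩
  | succ k ih =>
    have key : ∀ p : ι × (Fin k → ι),
        ∏ i, f ((Fin.consEquiv fun _ : Fin (k + 1) => ι) p i) = f p.1 * ∏ i, f (p.2 i) := by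
      intro p
      simp [Fin.prod_univ_succ, Fin.consEquiv]
    constructor
    · rw [← (Fin.consEquiv fun _ : Fin (k + 1) => ι).summable_iff]
      refine (Summable.mul_norm hf ih.1).congr fun p => ?_
      rw [Function.comp_apply, key]
    · rw [← (Fin.consEquiv fun _ : Fin (k + 1) => ι).tsum_eq, pow_succ', ← ih.2,
        tsum_mul_tsum_of_summable_norm hf ih.1]
      exact tsum_congr key

lemma summable_norm_exp_neg_mul_int_sq {z : ℂ} (hz : 0 < z.re) :
    Summable fun m : ℤ => ‖Complex.exp (-z * (m : ℂ) ^ 2)‖ := by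
  have h := (summable_jacobiTheta₂_term_iff 0 (Complex.I * z * ((1 / Real.pi : ℝ) : ℂ))).2 (by
    simp [Complex.mul_im]; positivity)
  refine h.norm.congr fun m => ?_
  congr 1
  rw [jacobiTheta₂_term]
  congr 1
  have := Complex.ofReal_ne_zero.2 Real.pi_ne_zero
  push_cast
  field_simp
  linear_combination (z * (m : ℂ) ^ 2) * Complex.I_sq

lemma card_fiber_eq_Sk (k n : ℕ) :
    Nat.card {p : (Fin k → ℤ) × ℕ // (∑ i, (p.1 i) ^ 2).toNat + p.2 = n} = Sk k n := by
  refine Nat.card_congr ⟨fun p => ⟨p.1.1, ?_⟩,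
    fun v => ⟨(v.1, n - (∑ i, (v.1 i) ^ 2).toNat), ?_⟩, fun p => ?_, fun v => rfl⟩
  · have h := p.2
    have h0 : 0 ≤ ∑ i, (p.1.1 i) ^ 2 := Finset.sum_nonneg fun i _ => sq_nonneg _
    have h1 : ∑ i, (p.1.1 i) ^ 2 ≤ (n : ℤ) := by omega
    exact_mod_cast h1
  · have h := v.2
    have h0 : 0 ≤ ∑ i, (v.1 i) ^ 2 := Finset.sum_nonneg fun i _ => sq_nonneg _
    have h1 : ∑ i, (v.1 i) ^ 2 ≤ (n : ℤ) := by exact_mod_cast h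
    simp only
    omega
  · have h := p.2
    ext1
    refine Prod.ext rfl ?_
    simp only
    omega

lemma hasSum_Sk_mul_exp (k : ℕ) {z : ℂ} (hz : 0 < z.re) :
    HasSum (fun n : ℕ => (Sk k n : ℂ) * Complex.exp (-z * n))
      ((∑' m : ℤ, Complex.exp (-z * (m : ℂ) ^ 2)) ^ k * (1 - Complex.exp (-z))⁻¹) := by
  obtain ⟨h1, h2⟩ := summable_norm_prod_and_tsum_prod _ (summable_norm_exp_neg_mul_int_sq hz) k
  have hq : ‖Complex.exp (-z)‖ < 1 := by
    rw [Complex.norm_exp]; simpa using hz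
  have h3 : Summable fun j : ℕ => ‖Complex.exp (-z) ^ j‖ := by
    simpa using summable_geometric_of_lt_one (norm_nonneg _) hq
  rw [← h2, ← tsum_geometric_of_norm_lt_one hq, tsum_mul_tsum_of_summable_norm h1 h3]
  have hS := summable_mul_of_summable_norm h1 h3
  have hsum := hS.hasSum
  set g : (Fin k → ℤ) × ℕ → ℕ := fun p => (∑ i, (p.1 i) ^ 2).toNat + p.2 with hg
  rw [← (Equiv.sigmaFiberEquiv g).hasSum_iff] at hsum
  refine hsum.sigma fun n => ?_
  have hc : ∀ c : {p // g p = n}, ((fun x : (Fin k → ℤ) × ℕ =>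
      (∏ i, Complex.exp (-z * (x.1 i : ℂ) ^ 2)) * Complex.exp (-z) ^ x.2) ∘
      (Equiv.sigmaFiberEquiv g)) ⟨n, c⟩ = Complex.exp (-z * n) := by
    intro c
    have h := c.2
    have h0 : 0 ≤ ∑ i, (c.1.1 i) ^ 2 := Finset.sum_nonneg fun i _ => sq_nonneg _
    have h4 : ∑ i, (c.1.1 i) ^ 2 + (c.1.2 : ℤ) = n := by simp only [hg] at h; omega
    have h5 : ∑ i, ((c.1.1 i : ℂ)) ^ 2 + (c.1.2 : ℂ) = n := by exact_mod_cast h4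
    rw [← h5]
    simp only [Function.comp_apply, Equiv.sigmaFiberEquiv, Equiv.coe_fn_mk]
    rw [← Complex.exp_sum, ← Complex.exp_nat_mul, ← Complex.exp_add, ← Finset.mul_sum]
    congr 1
    ring
  simp_rw [hc]
  have hs := (((Equiv.sigmaFiberEquiv g).summable_iff.2 hS).sigma_factor n)
  simp_rw [hc] at hs
  have := hs.hasSum
  rwa [tsum_const, card_fiber_eq_Sk, nsmul_eq_mul] at this

lemma pow_mul_exp_neg_le {a w : ℝ} (ha : 0 < a) (hw : 0 ≤ w) (j : ℕ) :
    w ^ j * Real.exp (-a * w) ≤ j.factorial / a ^ j := by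
  have h := Real.pow_div_factorial_le_exp (a * w) (by positivity) j
  have hj : (0 : ℝ) < j.factorial := by exact_mod_cast j.factorial_pos
  rw [div_le_iff₀ hj, mul_pow] at h
  rw [le_div_iff₀ (by positivity)]
  calc w ^ j * Real.exp (-a * w) * a ^ j = (a ^ j * w ^ j) * Real.exp (-a * w) := by ring
    _ ≤ (Real.exp (a * w) * j.factorial) * Real.exp (-a * w) := by gcongr
    _ = j.factorial := by
      rw [mul_right_comm, ← Real.exp_add]; simp

lemma summable_mul_pow_mul_exp {c : ℕ → ℝ} (hc0 : ∀ n, 0 ≤ c n)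
    (hc : ∀ x : ℝ, 0 < x → Summable fun n : ℕ => c n * Real.exp (-x * n)) (j : ℕ)
    {x : ℝ} (hx : 0 < x) : Summable fun n : ℕ => c n * (n : ℝ) ^ j * Real.exp (-x * n) := by
  refine Summable.of_nonneg_of_le (fun n => ?_) (fun n => ?_)
    ((hc (x / 2) (half_pos hx)).mul_left (j.factorial / (x / 2) ^ j : ℝ))
  · have := hc0 n; positivity
  · have h := pow_mul_exp_neg_le (half_pos hx) (Nat.cast_nonneg n) j
    have h1 : Real.exp (-x * n) = Real.exp (-(x / 2) * n) * Real.exp (-(x / 2) * n) := by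
      rw [← Real.exp_add]; ring_nf
    calc c n * (n : ℝ) ^ j * Real.exp (-x * n)
        = ((n : ℝ) ^ j * Real.exp (-(x / 2) * n)) * (c n * Real.exp (-(x / 2) * n)) := by
          rw [h1]; ring
      _ ≤ _ := mul_le_mul_of_nonneg_right h (mul_nonneg (hc0 n) (Real.exp_nonneg _))

lemma hasDerivAt_tsum_mul_exp {c : ℕ → ℝ} (hc0 : ∀ n, 0 ≤ c n)
    (hc : ∀ x : ℝ, 0 < x → Summable fun n : ℕ => c n * Real.exp (-x * n)) (j : ℕ)
    {z : ℂ} (hz : 0 < z.re) :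
    HasDerivAt (fun w : ℂ => ∑' n : ℕ, (c n : ℂ) * (-(n : ℂ)) ^ j * Complex.exp (-w * n))
      (∑' n : ℕ, (c n : ℂ) * (-(n : ℂ)) ^ (j + 1) * Complex.exp (-z * n)) z := by
  have hu := summable_mul_pow_mul_exp hc0 hc j (half_pos hz)
  have hU : IsOpen {w : ℂ | z.re / 2 < w.re} := isOpen_lt continuous_const Complex.continuous_re
  have hzU : z ∈ {w : ℂ | z.re / 2 < w.re} := by
    simp only [mem_ofPred_eq]; linarith
  have hd : ∀ n : ℕ, ∀ w : ℂ, HasDerivAt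
      (fun w : ℂ => (c n : ℂ) * (-(n : ℂ)) ^ j * Complex.exp (-w * n))
      ((c n : ℂ) * (-(n : ℂ)) ^ (j + 1) * Complex.exp (-w * n)) w := by
    intro n w
    have h := ((((hasDerivAt_id w).neg).mul_const (n : ℂ)).cexp).const_mul
      ((c n : ℂ) * (-(n : ℂ)) ^ j)
    refine h.congr_deriv ?_
    simp only [id, Pi.neg_apply]
    ring
  have hle : ∀ (n : ℕ) (w : ℂ), w ∈ {w : ℂ | z.re / 2 < w.re} →
      ‖(c n : ℂ) * (-(n : ℂ)) ^ j * Complex.exp (-w * n)‖ ≤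
        c n * (n : ℝ) ^ j * Real.exp (-(z.re / 2) * n) := by
    intro n w hw
    simp only [mem_ofPred_eq] at hw
    rw [norm_mul, norm_mul, norm_pow, norm_neg, Complex.norm_natCast, Complex.norm_real,
      Real.norm_of_nonneg (hc0 n), Complex.norm_exp]
    have : (-w * (n : ℂ)).re = -w.re * n := by simp
    rw [this]
    have := hc0 n
    gcongr
  have hdiff : ∀ n : ℕ, DifferentiableOn ℂ
      (fun w : ℂ => (c n : ℂ) * (-(n : ℂ)) ^ j * Complex.exp (-w * n))
      {w : ℂ | z.re / 2 < w.re} :=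
    fun n w _ => (hd n w).differentiableAt.differentiableWithinAt
  have h1 := Complex.hasSum_deriv_of_summable_norm hu hdiff hU hle hzU
  have h2 := Complex.differentiableOn_tsum_of_summable_norm hu hdiff hU hle
  have h3 := ((h2 z hzU).differentiableAt (hU.mem_nhds hzU)).hasDerivAt
  rw [← h1.tsum_eq] at h3
  refine h3.congr_deriv (tsum_congr fun n => (hd n z).deriv)

lemma norm_le_of_hasDerivAt_succ {G : ℕ → ℂ → ℂ}
    (hG : ∀ j z, 0 < z.re → HasDerivAt (G j) (G (j + 1) z) z) {y r B : ℝ} (hr : 0 < r)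
    (hry : r < y) (hB : ∀ z ∈ Metric.sphere (y : ℂ) r, ‖G 0 z‖ ≤ B) (N : ℕ) :
    ‖G N y‖ ≤ N.factorial * B / r ^ N := by
  have hU : IsOpen {w : ℂ | 0 < w.re} := isOpen_lt continuous_const Complex.continuous_re
  have key : ∀ j z, 0 < z.re → iteratedDeriv j (G 0) z = G j z := by
    intro j
    induction j with
    | zero => intro z _; simp
    | succ j ih =>
      intro z hz
      rw [iteratedDeriv_succ]
      have : iteratedDeriv j (G 0) =ᶠ[𝓝 z] G j :=
        eventually_of_mem (hU.mem_nhds hz) fun w hw => ih w hw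
      rw [this.deriv_eq, (hG j z hz).deriv]
  rw [← key N y (by simpa using hr.trans hry)]
  refine Complex.norm_iteratedDeriv_le_of_forall_mem_sphere_norm_le N hr ?_ hB
  refine DifferentiableOn.diffContOnCl fun z hz => ?_
  rw [closure_ball _ hr.ne'] at hz
  refine (hG 0 z ?_).differentiableAt.differentiableWithinAt
  have h1 := (Complex.abs_re_le_norm (z - y)).trans (mem_closedBall_iff_norm.1 hz)
  have h2 := (abs_le.1 h1).1
  simp at h2
  linarith

/-- `(-1)^j s(s+1)⋯(s+j-1) z^{-s-j}`, the `j`-th derivative of `z^{-s}`. -/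
noncomputable def cpowDeriv (s : ℝ) (j : ℕ) (z : ℂ) : ℂ :=
  ((((-1) ^ j * ∏ i ∈ Finset.range j, (s + i) : ℝ)) : ℂ) * z ^ (((-s - j : ℝ)) : ℂ)

lemma hasDerivAt_cpowDeriv (s : ℝ) (j : ℕ) {z : ℂ} (hz : 0 < z.re) :
    HasDerivAt (cpowDeriv s j) (cpowDeriv s (j + 1) z) z := by
  have h := ((hasDerivAt_id z).cpow_const (c := (((-s - j : ℝ)) : ℂ)) (Or.inl hz)).const_mul
    ((((-1) ^ j * ∏ i ∈ Finset.range j, (s + i) : ℝ)) : ℂ)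
  refine h.congr_deriv ?_
  have : (((-s - (j + 1 : ℕ) : ℝ)) : ℂ) = (((-s - j : ℝ)) : ℂ) - 1 := by push_cast; ring
  rw [cpowDeriv, this, Finset.prod_range_succ]
  push_cast
  simp only [id]
  ring

lemma prod_range_eq_Gamma_div {s : ℝ} (hs : 0 < s) (j : ℕ) :
    ∏ i ∈ Finset.range j, (s + i) = Real.Gamma (s + j) / Real.Gamma s := by
  have hG := (Real.Gamma_pos_of_pos hs).ne'
  induction j with
  | zero => simp [hG]
  | succ j ih =>
    have : s + j ≠ 0 := by positivity
    rw [Finset.prod_range_succ, ih, Nat.cast_succ, ← add_assoc, Real.Gamma_add_one this]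
    ring

lemma theta_eq {z : ℂ} (hz : 0 < z.re) :
    ∑' m : ℤ, Complex.exp (-z * (m : ℂ) ^ 2) =
      ((Real.pi ^ (1 / 2 : ℝ) : ℝ) : ℂ) * z ^ (((-(1 / 2) : ℝ)) : ℂ) *
        (1 + ∑' m : ℤ, if m = 0 then 0 else Complex.exp (-(Real.pi ^ 2 / z) * (m : ℂ) ^ 2)) := by
  have hpi := Real.pi_pos
  have hpi' : (Real.pi : ℂ) ≠ 0 := Complex.ofReal_ne_zero.2 Real.pi_ne_zero
  have hz0 : z ≠ 0 := fun h => by simp [h] at hz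
  have ha : 0 < (((Real.pi⁻¹ : ℝ) : ℂ) * z).re := by
    rw [Complex.re_ofReal_mul]; positivity
  have h := Complex.tsum_exp_neg_mul_int_sq ha
  have e1 : ∀ m : ℤ, -(Real.pi : ℂ) * (((Real.pi⁻¹ : ℝ) : ℂ) * z) * (m : ℂ) ^ 2
      = -z * (m : ℂ) ^ 2 := by
    intro m; push_cast; field_simp
  have e2 : ∀ m : ℤ, -(Real.pi : ℂ) / (((Real.pi⁻¹ : ℝ) : ℂ) * z) * (m : ℂ) ^ 2
      = -(Real.pi ^ 2 / z) * (m : ℂ) ^ 2 := by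
    intro m; push_cast; field_simp
  simp_rw [e1, e2] at h
  rw [h]
  have hre : 0 < ((Real.pi : ℂ) ^ 2 / z).re := by
    rw [← Complex.ofReal_pow, Complex.div_re]
    simp only [Complex.ofReal_re, Complex.ofReal_im, zero_mul, zero_div, add_zero]
    have := Complex.normSq_pos.2 hz0
    positivity
  rw [(summable_norm_exp_neg_mul_int_sq hre).of_norm.tsum_eq_add_tsum_ite 0]
  congr 1
  · rw [one_div, ← Complex.cpow_neg, Complex.cpow_def_of_ne_zero (by simp [hz0]),
      Complex.cpow_def_of_ne_zero hz0, Complex.log_ofReal_mul (by positivity) hz0,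
      Real.rpow_def_of_pos hpi, Complex.ofReal_exp, ← Complex.exp_add, Real.log_inv]
    congr 1
    push_cast
    ring
  · simp

lemma theta_pow_eq (k : ℕ) {z : ℂ} (hz : 0 < z.re) :
    (∑' m : ℤ, Complex.exp (-z * (m : ℂ) ^ 2)) ^ k =
      ((Real.pi ^ ((k : ℝ) / 2) : ℝ) : ℂ) * z ^ (((-((k : ℝ) / 2) : ℝ)) : ℂ) *
        (1 + ∑' m : ℤ,
          if m = 0 then 0 else Complex.exp (-(Real.pi ^ 2 / z) * (m : ℂ) ^ 2)) ^ k := by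
  rw [theta_eq hz, mul_pow, mul_pow, ← Complex.ofReal_pow, ← Real.rpow_mul_natCast Real.pi_pos.le,
    ← Complex.cpow_nat_mul]
  congr 3
  · ring_nf
  · push_cast; ring

lemma norm_tsum_theta_tail_le {z : ℂ} {y : ℝ} (hy : 0 < y) (hz1 : y / 2 ≤ z.re)
    (hz2 : ‖z‖ ≤ 3 / 2 * y) :
    ‖∑' m : ℤ, if m = 0 then (0 : ℂ) else Complex.exp (-(Real.pi ^ 2 / z) * (m : ℂ) ^ 2)‖ ≤
      (∑' m : ℤ, 6 * (1 / (m : ℝ) ^ 2)) * y ^ 3 := by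
  have hz0 : z ≠ 0 := fun h => by simp [h] at hz1; linarith
  have hn := Complex.normSq_pos.2 hz0
  rw [← tsum_mul_right]
  refine tsum_of_norm_bounded
    ((((Real.summable_one_div_int_pow (p := 2)).2 (by norm_num)).mul_left 6).mul_right
      (y ^ 3)).hasSum fun m => ?_
  split_ifs with hm
  · rw [norm_zero]; positivity
  have hm1 : (1 : ℝ) ≤ (m : ℝ) ^ 2 := by
    have : (1 : ℤ) ≤ m ^ 2 := by have := pow_pos (abs_pos.2 hm) 2; rw [sq_abs] at this; omega
    exact_mod_cast this
  have hre : 1 / y ≤ Real.pi ^ 2 * z.re / Complex.normSq z := by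
    rw [div_le_div_iff₀ hy hn, Complex.normSq_eq_norm_sq]
    have h9 : (9 : ℝ) ≤ Real.pi ^ 2 := by nlinarith [Real.pi_gt_three]
    calc 1 * ‖z‖ ^ 2 ≤ (3 / 2 * y) ^ 2 := by rw [one_mul]; gcongr
      _ ≤ 9 * (y / 2) * y := by nlinarith [sq_nonneg y]
      _ ≤ Real.pi ^ 2 * z.re * y := by gcongr
  have he : (-((Real.pi : ℂ) ^ 2 / z) * (m : ℂ) ^ 2).re =
      -(Real.pi ^ 2 * z.re / Complex.normSq z) * (m : ℝ) ^ 2 := by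
    have h1 : ((m : ℂ) ^ 2) = (((m : ℝ) ^ 2 : ℝ) : ℂ) := by push_cast; rfl
    rw [h1, ← Complex.ofReal_pow, Complex.re_mul_ofReal, Complex.neg_re, Complex.div_re,
      Complex.ofReal_re, Complex.ofReal_im]
    ring
  rw [Complex.norm_exp, he]
  have hw : (m : ℝ) ^ 2 / y ≤ Real.pi ^ 2 * z.re / Complex.normSq z * (m : ℝ) ^ 2 := by
    calc (m : ℝ) ^ 2 / y = 1 / y * (m : ℝ) ^ 2 := by ring
      _ ≤ _ := by gcongr
  have hb := pow_mul_exp_neg_le one_pos (w := (m : ℝ) ^ 2 / y) (by positivity) 3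
  have hb' : Real.exp (-1 * ((m : ℝ) ^ 2 / y)) ≤ 6 * (y ^ 3 / (m : ℝ) ^ 6) := by
    have h6 : ((Nat.factorial 3 : ℕ) : ℝ) = 6 := by norm_num [Nat.factorial]
    rw [h6, one_pow, div_one] at hb
    have : (m : ℝ) ≠ 0 := by exact_mod_cast hm
    calc Real.exp (-1 * ((m : ℝ) ^ 2 / y))
        = (((m : ℝ) ^ 2 / y) ^ 3 * Real.exp (-1 * ((m : ℝ) ^ 2 / y))) * (y ^ 3 / (m : ℝ) ^ 6) := by
          field_simp
      _ ≤ 6 * (y ^ 3 / (m : ℝ) ^ 6) := by gcongr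
  calc Real.exp (-(Real.pi ^ 2 * z.re / Complex.normSq z) * (m : ℝ) ^ 2)
      ≤ Real.exp (-1 * ((m : ℝ) ^ 2 / y)) := Real.exp_le_exp.2 (by linarith)
    _ ≤ 6 * (y ^ 3 / (m : ℝ) ^ 6) := hb'
    _ ≤ 6 * (y ^ 3 / (m : ℝ) ^ 2) := by
      have h26 : (m : ℝ) ^ 2 ≤ (m : ℝ) ^ 6 := by
        calc (m : ℝ) ^ 2 = (m : ℝ) ^ 2 * 1 := by ring
          _ ≤ (m : ℝ) ^ 2 * ((m : ℝ) ^ 2) ^ 2 := by gcongr; nlinarith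
          _ = (m : ℝ) ^ 6 := by ring
      have : 0 < (m : ℝ) ^ 2 := by linarith
      exact mul_le_mul_of_nonneg_left (div_le_div_of_nonneg_left (by positivity) this h26)
        (by norm_num)
    _ = 6 * (1 / (m : ℝ) ^ 2) * y ^ 3 := by ring

lemma norm_one_sub_exp_neg_ge {z : ℂ} (hz : ‖z‖ ≤ 3 / 4) :
    7 / 16 * ‖z‖ ≤ ‖1 - Complex.exp (-z)‖ := by
  have h := Complex.exp_bound (x := -z) (by rw [norm_neg]; linarith) (n := 2) (by norm_num)
  simp only [Finset.sum_range_succ, Finset.sum_range_zero, norm_neg] at h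
  norm_num at h
  have h2 : ‖z‖ ≤ ‖1 - Complex.exp (-z)‖ + ‖Complex.exp (-z) - (1 + -z)‖ := by
    have : z = (1 - Complex.exp (-z)) + (Complex.exp (-z) - (1 + -z)) := by ring
    calc ‖z‖ = ‖(1 - Complex.exp (-z)) + (Complex.exp (-z) - (1 + -z))‖ := by rw [← this]
      _ ≤ _ := norm_add_le _ _
  nlinarith [norm_nonneg z]

lemma norm_inv_one_sub_exp_neg_sub_le {z : ℂ} (hz0 : z ≠ 0) (hz : ‖z‖ ≤ 3 / 4) :
    ‖(1 - Complex.exp (-z))⁻¹ - (1 / z + 1 / 2 + z / 12)‖ ≤ ‖z‖ ^ 2 := by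
  have hn : 0 < ‖z‖ := norm_pos_iff.2 hz0
  have hD := norm_one_sub_exp_neg_ge hz
  have hD0 : 1 - Complex.exp (-z) ≠ 0 := norm_pos_iff.1 (by linarith)
  have h := Complex.exp_bound (x := -z) (by rw [norm_neg]; linarith) (n := 4) (by norm_num)
  simp only [Finset.sum_range_succ, Finset.sum_range_zero, norm_neg] at h
  norm_num [Nat.factorial] at h
  set R := Complex.exp (-z) - (1 + -z + z ^ 2 / 2 + (-z) ^ 3 / 6) with hR
  have e : (1 - Complex.exp (-z))⁻¹ - (1 / z + 1 / 2 + z / 12) =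
      (R * (1 / z + 1 / 2 + z / 12) - z ^ 3 / 24 - z ^ 4 / 72 ) * (1 - Complex.exp (-z))⁻¹ := by
    have : 1 = (1 - Complex.exp (-z)) * (1 - Complex.exp (-z))⁻¹ := (mul_inv_cancel₀ hD0).symm
    have h2 : (1 - Complex.exp (-z))⁻¹ - (1 / z + 1 / 2 + z / 12) =
      (1 - (1 - Complex.exp (-z)) * (1 / z + 1 / 2 + z / 12)) * (1 - Complex.exp (-z))⁻¹ := by
      linear_combination -(1 / z + 1 / 2 + z / 12) * this
    rw [h2, hR]
    congr 1
    field_simp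
    ring
  rw [e, norm_mul, norm_inv]
  have hm : ‖1 / z + 1 / 2 + z / 12‖ ≤ 1 / ‖z‖ + 1 / 2 + ‖z‖ / 12 := by
    refine (norm_add₃_le).trans (le_of_eq ?_)
    simp
  have hnum : ‖R * (1 / z + 1 / 2 + z / 12) - z ^ 3 / 24 - z ^ 4 / 72‖ ≤ 7 / 16 * ‖z‖ ^ 3 := by
    calc ‖R * (1 / z + 1 / 2 + z / 12) - z ^ 3 / 24 - z ^ 4 / 72‖
        ≤ ‖R * (1 / z + 1 / 2 + z / 12)‖ + ‖z ^ 3 / 24‖ + ‖z ^ 4 / 72‖ :=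
          (norm_sub_le _ _).trans (add_le_add_left (norm_sub_le _ _) _)
      _ = ‖R‖ * ‖1 / z + 1 / 2 + z / 12‖ + ‖z‖ ^ 3 / 24 + ‖z‖ ^ 4 / 72 := by simp
      _ ≤ ‖z‖ ^ 4 * (5 / 96) * (1 / ‖z‖ + 1 / 2 + ‖z‖ / 12) + ‖z‖ ^ 3 / 24 + ‖z‖ ^ 4 / 72 := by
          gcongr
      _ = ‖z‖ ^ 3 * (5 / 96 * (1 + ‖z‖ / 2 + ‖z‖ ^ 2 / 12) + 1 / 24 + ‖z‖ / 72) := by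
          field_simp
      _ ≤ ‖z‖ ^ 3 * (7 / 16) := by
          gcongr
          nlinarith
      _ = _ := by ring
  have hpos : 0 < 7 / 16 * ‖z‖ := by positivity
  calc _ ≤ 7 / 16 * ‖z‖ ^ 3 * (7 / 16 * ‖z‖)⁻¹ := by gcongr
    _ = ‖z‖ ^ 2 := by field_simp

lemma summable_Sk_mul_exp (k : ℕ) {x : ℝ} (hx : 0 < x) :
    Summable fun n : ℕ => (Sk k n : ℝ) * Real.exp (-x * n) := by
  have h := (hasSum_Sk_mul_exp k (z := (x : ℂ)) (by simpa using hx)).summable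
  exact_mod_cast h

/-- `j`-th derivative of the difference between the generating series `∑ S_k(n) e^{-nz}` and the
first three terms of its expansion at `z = 0`. -/
noncomputable def seriesError (k j : ℕ) (z : ℂ) : ℂ :=
  (∑' n : ℕ, (((Sk k n : ℝ)) : ℂ) * (-(n : ℂ)) ^ j * Complex.exp (-z * n)) -
    ((Real.pi ^ ((k : ℝ) / 2) : ℝ) : ℂ) * (cpowDeriv ((k : ℝ) / 2 + 1) j z +
      1 / 2 * cpowDeriv ((k : ℝ) / 2) j z + 1 / 12 * cpowDeriv ((k : ℝ) / 2 - 1) j z)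

lemma hasDerivAt_seriesError (k j : ℕ) {z : ℂ} (hz : 0 < z.re) :
    HasDerivAt (seriesError k j) (seriesError k (j + 1) z) z :=
  (hasDerivAt_tsum_mul_exp (fun _ => Nat.cast_nonneg _)
    (fun _ hx => summable_Sk_mul_exp k hx) j hz).sub
    ((((hasDerivAt_cpowDeriv _ j hz).add ((hasDerivAt_cpowDeriv _ j hz).const_mul _)).add
      ((hasDerivAt_cpowDeriv _ j hz).const_mul _)).const_mul _)

lemma seriesError_zero_eq (k : ℕ) {z : ℂ} (hz : 0 < z.re) :
    seriesError k 0 z = ((Real.pi ^ ((k : ℝ) / 2) : ℝ) : ℂ) * z ^ (((-((k : ℝ) / 2) : ℝ)) : ℂ) *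
      (((1 + ∑' m : ℤ, if m = 0 then (0 : ℂ) else
          Complex.exp (-(Real.pi ^ 2 / z) * (m : ℂ) ^ 2)) ^ k - 1) * (1 - Complex.exp (-z))⁻¹ +
        ((1 - Complex.exp (-z))⁻¹ - (1 / z + 1 / 2 + z / 12))) := by
  have hz0 : z ≠ 0 := fun h => by simp [h] at hz
  have h := (hasSum_Sk_mul_exp k hz).tsum_eq
  rw [theta_pow_eq k hz] at h
  have h1 : z ^ (((-((k : ℝ) / 2 + 1) : ℝ)) : ℂ) = z ^ (((-((k : ℝ) / 2) : ℝ)) : ℂ) * (1 / z) := by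
    rw [one_div, ← Complex.cpow_neg_one, ← Complex.cpow_add _ _ hz0]
    congr 1; push_cast; ring
  have h2 : z ^ (((-((k : ℝ) / 2 - 1) : ℝ)) : ℂ) = z ^ (((-((k : ℝ) / 2) : ℝ)) : ℂ) * z := by
    nth_rw 3 [← Complex.cpow_one z]
    rw [← Complex.cpow_add _ _ hz0]
    congr 1; push_cast; ring
  simp only [seriesError, cpowDeriv, pow_zero, mul_one, Finset.range_zero, Finset.prod_empty,
    Nat.cast_zero, sub_zero, Complex.ofReal_natCast, Complex.ofReal_one, one_mul]
  rw [h, h1, h2]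
  ring

lemma norm_one_add_pow_sub_one_le {δ : ℂ} {D : ℝ} (hD : ‖δ‖ ≤ D) (k : ℕ) :
    ‖(1 + δ) ^ k - 1‖ ≤ ‖δ‖ * (k * (1 + D) ^ k) := by
  have hD0 : 0 ≤ D := (norm_nonneg _).trans hD
  have h := mul_geom_sum (1 + δ) k
  rw [add_sub_cancel_left] at h
  rw [← h, norm_mul]
  refine mul_le_mul_of_nonneg_left ?_ (norm_nonneg _)
  calc ‖∑ i ∈ Finset.range k, (1 + δ) ^ i‖ ≤ ∑ i ∈ Finset.range k, (1 + D) ^ k := by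
        refine norm_sum_le_of_le _ fun i hi => ?_
        rw [norm_pow]
        calc ‖1 + δ‖ ^ i ≤ (1 + D) ^ i := by
              gcongr
              refine (norm_add_le _ _).trans ?_
              rw [norm_one]; linarith
          _ ≤ (1 + D) ^ k := pow_le_pow_right₀ (by linarith) (Finset.mem_range.1 hi).le
    _ = k * (1 + D) ^ k := by simp

lemma exists_norm_seriesError_zero_le (k : ℕ) : ∃ C : ℝ, 0 ≤ C ∧ ∀ y : ℝ, 0 < y → y ≤ 1 / 2 →
    ∀ z ∈ Metric.sphere (y : ℂ) (y / 2), ‖seriesError k 0 z‖ ≤ C * y ^ (2 - (k : ℝ) / 2) := by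
  set D : ℝ := ∑' m : ℤ, 6 * (1 / (m : ℝ) ^ 2) with hDdef
  have hD0 : 0 ≤ D := tsum_nonneg fun m => by positivity
  refine ⟨Real.pi ^ ((k : ℝ) / 2) * (1 / 2) ^ (-((k : ℝ) / 2)) *
    (D * (k * (1 + D) ^ k) * (32 / 7) + 9 / 4), by positivity, fun y hy hy2 z hz => ?_⟩
  rw [mem_sphere_iff_norm] at hz
  have hre : y / 2 ≤ z.re := by
    have h1 := (abs_le.1 ((Complex.abs_re_le_norm (z - y)).trans hz.le)).1
    simp at h1; linarith
  have hz0 : 0 < z.re := by linarith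
  have hzne : z ≠ 0 := fun h => by simp [h] at hz0
  have hup : ‖z‖ ≤ 3 / 2 * y := by
    have : ‖z‖ ≤ ‖z - y‖ + ‖(y : ℂ)‖ := by simpa using norm_add_le (z - y) (y : ℂ)
    rw [hz, Complex.norm_real, Real.norm_of_nonneg hy.le] at this
    linarith
  have hlow : 1 / 2 * y ≤ ‖z‖ := by
    have := (le_abs_self z.re).trans (Complex.abs_re_le_norm z); linarith
  have hz34 : ‖z‖ ≤ 3 / 4 := by linarith
  have hδ := norm_tsum_theta_tail_le hy hre hup
  rw [← hDdef] at hδ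
  have hδD := hδ.trans (mul_le_of_le_one_right hD0 (pow_le_one₀ hy.le (by linarith)))
  have hpow := norm_one_add_pow_sub_one_le hδD k
  have hB : ‖(1 - Complex.exp (-z))⁻¹‖ ≤ 32 / 7 / y := by
    rw [norm_inv]
    calc ‖1 - Complex.exp (-z)‖⁻¹ ≤ (7 / 16 * (1 / 2 * y))⁻¹ := by
          gcongr
          exact (by gcongr : _ ≤ 7 / 16 * ‖z‖).trans (norm_one_sub_exp_neg_ge hz34)
      _ = _ := by field_simp; norm_num
  have hBm := norm_inv_one_sub_exp_neg_sub_le hzne hz34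
  have hcp : ‖z ^ (((-((k : ℝ) / 2) : ℝ)) : ℂ)‖ ≤
      (1 / 2) ^ (-((k : ℝ) / 2)) * y ^ (-((k : ℝ) / 2)) := by
    rw [Complex.norm_cpow_real, ← Real.mul_rpow (by norm_num) hy.le]
    exact Real.rpow_le_rpow_of_nonpos (by positivity) hlow
      (by have : (0 : ℝ) ≤ k := Nat.cast_nonneg k; linarith)
  rw [seriesError_zero_eq k hz0, norm_mul, norm_mul, Complex.norm_real,
    Real.norm_of_nonneg (by positivity)]
  calc _ ≤ Real.pi ^ ((k : ℝ) / 2) * ((1 / 2) ^ (-((k : ℝ) / 2)) * y ^ (-((k : ℝ) / 2))) *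
        (D * y ^ 3 * (k * (1 + D) ^ k) * (32 / 7 / y) + (3 / 2 * y) ^ 2) := by
        gcongr
        refine (norm_add_le _ _).trans ?_
        rw [norm_mul]
        gcongr
        · refine hpow.trans ?_
          gcongr
        · refine hBm.trans ?_
          gcongr
    _ = Real.pi ^ ((k : ℝ) / 2) * (1 / 2) ^ (-((k : ℝ) / 2)) *
      (D * (k * (1 + D) ^ k) * (32 / 7) + 9 / 4) * (y ^ (-((k : ℝ) / 2)) * y ^ (2 : ℕ)) := by
        field_simp; ring
    _ = _ := by
        rw [← Real.rpow_add_natCast hy.ne']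
        congr 2; push_cast; ring

/-- `s(s+1)⋯(s+N-1) y^{-s-N}`. -/
noncomputable def rpowTerm (s : ℝ) (N : ℕ) (y : ℝ) : ℝ :=
  (∏ i ∈ Finset.range N, (s + i)) * y ^ (-s - N)

/-- The main terms of `∑ S_k(n) n^N e^{-ny}` as `y → 0`. -/
noncomputable def mainTerm (k N : ℕ) (y : ℝ) : ℝ :=
  Real.pi ^ ((k : ℝ) / 2) * (rpowTerm ((k : ℝ) / 2 + 1) N y +
    1 / 2 * rpowTerm ((k : ℝ) / 2) N y + 1 / 12 * rpowTerm ((k : ℝ) / 2 - 1) N y)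

lemma cpowDeriv_ofReal (s : ℝ) (N : ℕ) {y : ℝ} (hy : 0 < y) :
    cpowDeriv s N y = (((-1) ^ N * rpowTerm s N y : ℝ) : ℂ) := by
  rw [cpowDeriv, ← Complex.ofReal_cpow hy.le, ← Complex.ofReal_mul, rpowTerm, mul_assoc]

lemma seriesError_ofReal (k N : ℕ) {y : ℝ} (hy : 0 < y) :
    seriesError k N y = (((-1) ^ N * ((∑' n : ℕ, (Sk k n : ℝ) * (n : ℝ) ^ N * Real.exp (-y * n)) -
      mainTerm k N y) : ℝ) : ℂ) := by
  have h : ∀ n : ℕ, (((Sk k n : ℝ)) : ℂ) * (-(n : ℂ)) ^ N * Complex.exp (-y * n) =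
      (((-1) ^ N * ((Sk k n : ℝ) * (n : ℝ) ^ N * Real.exp (-y * n)) : ℝ) : ℂ) := by
    intro n
    rw [neg_pow]
    push_cast
    ring
  rw [seriesError, tsum_congr h, ← Complex.ofReal_tsum, tsum_mul_left, cpowDeriv_ofReal _ _ hy,
    cpowDeriv_ofReal _ _ hy, cpowDeriv_ofReal _ _ hy, mainTerm]
  push_cast
  ring

lemma exists_abs_tsum_sub_mainTerm_le (k N : ℕ) : ∃ C : ℝ, 0 ≤ C ∧ ∀ y : ℝ, 0 < y → y ≤ 1 / 2 →
    |(∑' n : ℕ, (Sk k n : ℝ) * (n : ℝ) ^ N * Real.exp (-y * n)) - mainTerm k N y| ≤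
      C * y ^ (2 - (k : ℝ) / 2 - N) := by
  obtain ⟨C, hC0, hC⟩ := exists_norm_seriesError_zero_le k
  refine ⟨N.factorial * C * 2 ^ N, by positivity, fun y hy hy2 => ?_⟩
  have h := norm_le_of_hasDerivAt_succ (fun j z hz => hasDerivAt_seriesError k j hz)
    (half_pos hy) (half_lt_self hy) (hC y hy hy2) N
  rw [seriesError_ofReal k N hy, Complex.norm_real, norm_mul, norm_pow, norm_neg, norm_one,
    one_pow, one_mul, Real.norm_eq_abs] at h
  refine h.trans (le_of_eq ?_)
  rw [Real.rpow_sub_natCast hy.ne', div_pow]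
  field_simp

lemma integrableOn_rpow_mul_exp {a r : ℝ} (ha : 0 < a) (hr : 0 < r) :
    IntegrableOn (fun t : ℝ => t ^ (a - 1) * Real.exp (-(r * t))) (Ioi 0) := by
  have h := integrableOn_rpow_mul_exp_neg_mul_rpow (p := 1) (s := a - 1) (b := r) (by linarith)
    one_pos hr
  simpa using h

lemma lintegral_rpow_mul_exp {a r : ℝ} (ha : 0 < a) (hr : 0 < r) :
    ∫⁻ t in Ioi (0 : ℝ), ENNReal.ofReal (t ^ (a - 1) * Real.exp (-(r * t))) =
      ENNReal.ofReal ((1 / r) ^ a * Real.Gamma a) := by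
  rw [← Real.integral_rpow_mul_exp_neg_mul_Ioi ha hr,
    ofReal_integral_eq_lintegral_ofReal (integrableOn_rpow_mul_exp ha hr)]
  refine (ae_restrict_iff' measurableSet_Ioi).2 (ae_of_all _ fun t ht => ?_)
  have : 0 < t := ht
  simp only [Pi.zero_apply]
  positivity

lemma lintegral_rpow_mul_add_rpow {b p y : ℝ} (hb : 0 < b) (hp : 0 < p) (hy : 0 < y) :
    ∫⁻ u in Ioi (0 : ℝ), ENNReal.ofReal (u ^ (b - 1) * (y + u) ^ (-(b + p))) =
      ENNReal.ofReal (Real.Gamma b * (Real.Gamma p / Real.Gamma (b + p) * y ^ (-p))) := by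
  have hGq : 0 < Real.Gamma (b + p) := Real.Gamma_pos_of_pos (by positivity)
  have hGb := Real.Gamma_pos_of_pos hb
  have e1 : ∀ u ∈ Ioi (0 : ℝ), ENNReal.ofReal (u ^ (b - 1) * (y + u) ^ (-(b + p))) =
      ENNReal.ofReal (1 / Real.Gamma (b + p)) * ∫⁻ t in Ioi (0 : ℝ), ENNReal.ofReal
        (u ^ (b - 1) * (t ^ (b + p - 1) * Real.exp (-((y + u) * t)))) := by
    intro u hu
    have hu : 0 < u := hu
    have hub : 0 ≤ u ^ (b - 1) := by positivity
    simp_rw [ENNReal.ofReal_mul hub]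
    rw [lintegral_const_mul' _ _ ENNReal.ofReal_ne_top,
      lintegral_rpow_mul_exp (by positivity) (by positivity), ← ENNReal.ofReal_mul (by positivity),
      ← ENNReal.ofReal_mul (by positivity), ← ENNReal.ofReal_mul (by positivity),
      Real.rpow_neg (by positivity), one_div (y + u), Real.inv_rpow (by positivity)]
    congr 1
    field_simp
  have e2 : ∀ t ∈ Ioi (0 : ℝ), ∫⁻ u in Ioi (0 : ℝ), ENNReal.ofReal
        (u ^ (b - 1) * (t ^ (b + p - 1) * Real.exp (-((y + u) * t)))) =
      ENNReal.ofReal (Real.Gamma b) * ENNReal.ofReal (t ^ (p - 1) * Real.exp (-(y * t))) := by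
    intro t ht
    have ht : 0 < t := ht
    have hc : 0 ≤ t ^ (b + p - 1) * Real.exp (-(y * t)) := by positivity
    have e3 : ∀ u : ℝ, u ^ (b - 1) * (t ^ (b + p - 1) * Real.exp (-((y + u) * t))) =
        t ^ (b + p - 1) * Real.exp (-(y * t)) * (u ^ (b - 1) * Real.exp (-(t * u))) := by
      intro u
      rw [show -((y + u) * t) = -(y * t) + -(t * u) by ring, Real.exp_add]
      ring
    simp_rw [e3, ENNReal.ofReal_mul hc]
    rw [lintegral_const_mul' _ _ ENNReal.ofReal_ne_top, lintegral_rpow_mul_exp hb ht,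
      ← ENNReal.ofReal_mul hc, ← ENNReal.ofReal_mul hGb.le, one_div, Real.inv_rpow ht.le,
      show b + p - 1 = b + (p - 1) by ring, Real.rpow_add ht]
    congr 1
    have : t ^ b ≠ 0 := by positivity
    field_simp
  rw [setLIntegral_congr_fun measurableSet_Ioi e1,
    lintegral_const_mul' _ _ ENNReal.ofReal_ne_top, lintegral_lintegral_swap (by fun_prop),
    setLIntegral_congr_fun measurableSet_Ioi e2,
    lintegral_const_mul' _ _ ENNReal.ofReal_ne_top, lintegral_rpow_mul_exp hp hy,
    ← ENNReal.ofReal_mul hGb.le, ← ENNReal.ofReal_mul (by positivity), one_div y,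
    Real.inv_rpow hy.le, ← Real.rpow_neg hy.le]
  congr 1
  ring

lemma integrableOn_and_integral_rpow_mul_add_rpow {b p y : ℝ} (hb : 0 < b) (hp : 0 < p)
    (hy : 0 < y) :
    IntegrableOn (fun u : ℝ => u ^ (b - 1) * (y + u) ^ (-(b + p))) (Ioi 0) ∧
    ∫ u in Ioi (0 : ℝ), u ^ (b - 1) * (y + u) ^ (-(b + p)) =
      Real.Gamma b * (Real.Gamma p / Real.Gamma (b + p) * y ^ (-p)) := by
  have hGq : 0 < Real.Gamma (b + p) := Real.Gamma_pos_of_pos (by positivity)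
  have hGb := Real.Gamma_pos_of_pos hb
  have hGp := Real.Gamma_pos_of_pos hp
  have hl := lintegral_rpow_mul_add_rpow hb hp hy
  have hm : AEStronglyMeasurable (fun u : ℝ => u ^ (b - 1) * (y + u) ^ (-(b + p)))
      (volume.restrict (Ioi 0)) := by
    refine Measurable.aestronglyMeasurable ?_
    fun_prop
  have hnn : 0 ≤ᵐ[volume.restrict (Ioi 0)]
      fun u : ℝ => u ^ (b - 1) * (y + u) ^ (-(b + p)) := by
    refine (ae_restrict_iff' measurableSet_Ioi).2 (ae_of_all _ fun u hu => ?_)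
    have : 0 < u := hu
    simp only [Pi.zero_apply]
    positivity
  refine ⟨(lintegral_ofReal_ne_top_iff_integrable hm hnn).1 (by rw [hl]; exact ENNReal.ofReal_ne_top),
    ?_⟩
  rw [integral_eq_lintegral_of_nonneg_ae hnn hm, hl, ENNReal.toReal_ofReal (by positivity)]

lemma integrableOn_and_integral_rpowTerm {b s y : ℝ} {N : ℕ} (hb : 0 < b) (hs : 0 < s)
    (hbs : b < s + N) (hy : 0 < y) :
    IntegrableOn (fun u : ℝ => u ^ (b - 1) * rpowTerm s N (y + u)) (Ioi 0) ∧
    ∫ u in Ioi (0 : ℝ), u ^ (b - 1) * rpowTerm s N (y + u) =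
      Real.Gamma b * (Real.Gamma (s + N - b) / Real.Gamma s * y ^ (-(s + N - b))) := by
  obtain ⟨h1, h2⟩ := integrableOn_and_integral_rpow_mul_add_rpow hb (sub_pos.2 hbs) hy
  have e : (fun u : ℝ => u ^ (b - 1) * rpowTerm s N (y + u)) = fun u : ℝ =>
      (Real.Gamma (s + N) / Real.Gamma s) * (u ^ (b - 1) * (y + u) ^ (-(b + (s + N - b)))) := by
    ext u
    rw [rpowTerm, prod_range_eq_Gamma_div hs, show -(b + (s + N - b)) = -s - N by ring]
    ring
  have hG : Real.Gamma (s + N) ≠ 0 := (Real.Gamma_pos_of_pos (by positivity)).ne'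
  rw [e]
  refine ⟨h1.const_mul _, ?_⟩
  rw [integral_const_mul, h2, show b + (s + N - b) = s + N by ring]
  field_simp

lemma hasSum_mul_rpow_mul_exp {c : ℕ → ℝ} (hc0 : ∀ n, 0 ≤ c n)
    (hc : ∀ x : ℝ, 0 < x → Summable fun n : ℕ => c n * Real.exp (-x * n)) {N : ℕ} (hN : N ≠ 0)
    {b y : ℝ} (hb : 0 < b) (hy : 0 < y) :
    HasSum (fun n : ℕ => Real.Gamma b *
      (c (n + 1) * ((n : ℝ) + 1) ^ (N - b) * Real.exp (-y * ((n : ℝ) + 1))))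
      (∫ u in Ioi (0 : ℝ), u ^ (b - 1) *
        ∑' n : ℕ, c n * (n : ℝ) ^ N * Real.exp (-(y + u) * n)) := by
  have hGb := Real.Gamma_pos_of_pos hb
  set F : ℕ → ℝ → ℝ := fun n u => (c (n + 1) * ((n : ℝ) + 1) ^ N * Real.exp (-y * ((n : ℝ) + 1))) *
    (u ^ (b - 1) * Real.exp (-(((n : ℝ) + 1) * u))) with hF
  have hcoef : ∀ n : ℕ, 0 ≤ c (n + 1) * ((n : ℝ) + 1) ^ N * Real.exp (-y * ((n : ℝ) + 1)) := by
    intro n; have := hc0 (n + 1); positivity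
  have hint : ∀ n, IntegrableOn (F n) (Ioi 0) := fun n =>
    (integrableOn_rpow_mul_exp hb (by positivity)).const_mul _
  have hval : ∀ n, ∫ u in Ioi (0 : ℝ), F n u = Real.Gamma b *
      (c (n + 1) * ((n : ℝ) + 1) ^ (N - b) * Real.exp (-y * ((n : ℝ) + 1))) := by
    intro n
    have hn : (0 : ℝ) < (n : ℝ) + 1 := by positivity
    simp only [hF]
    rw [integral_const_mul, Real.integral_rpow_mul_exp_neg_mul_Ioi hb hn, one_div,
      Real.inv_rpow hn.le, Real.rpow_sub hn, Real.rpow_natCast]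
    field_simp
  have hnorm : ∀ n, ∫ u in Ioi (0 : ℝ), ‖F n u‖ = Real.Gamma b *
      (c (n + 1) * ((n : ℝ) + 1) ^ (N - b) * Real.exp (-y * ((n : ℝ) + 1))) := by
    intro n
    rw [← hval n]
    refine setIntegral_congr_fun measurableSet_Ioi fun u hu => ?_
    have hu : 0 < u := hu
    exact Real.norm_of_nonneg (mul_nonneg (hcoef n) (by positivity))
  have hsum : Summable fun n : ℕ => Real.Gamma b *
      (c (n + 1) * ((n : ℝ) + 1) ^ (N - b) * Real.exp (-y * ((n : ℝ) + 1))) := by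
    refine Summable.mul_left _ ?_
    have h := (summable_nat_add_iff 1).2 (summable_mul_pow_mul_exp hc0 hc N hy)
    refine Summable.of_nonneg_of_le (fun n => ?_) (fun n => ?_) h
    · have := hc0 (n + 1); positivity
    · have := hc0 (n + 1)
      push_cast
      gcongr
      rw [← Real.rpow_natCast]
      exact Real.rpow_le_rpow_of_exponent_le (by linarith [(Nat.cast_nonneg n : (0 : ℝ) ≤ n)])
        (sub_le_self _ hb.le)
  have key := hasSum_integral_of_summable_integral_norm hint (by simpa only [hnorm] using hsum)
  simp only [hval] at key
  suffices e : ∫ u in Ioi (0 : ℝ), u ^ (b - 1) *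
      ∑' n : ℕ, c n * (n : ℝ) ^ N * Real.exp (-(y + u) * n) =
      ∫ u in Ioi (0 : ℝ), ∑' n, F n u by
    rw [e]; exact key
  refine setIntegral_congr_fun measurableSet_Ioi fun u hu => ?_
  have hu : 0 < u := hu
  have h := summable_mul_pow_mul_exp hc0 hc N (add_pos hy hu)
  rw [h.tsum_eq_zero_add, Nat.cast_zero, zero_pow hN, mul_zero, zero_mul, zero_add,
    ← tsum_mul_left]
  refine tsum_congr fun n => ?_
  simp only [hF]
  push_cast
  rw [show -(y + u) * ((n : ℝ) + 1) = -y * ((n : ℝ) + 1) + -(((n : ℝ) + 1) * u) by ring,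
    Real.exp_add]
  ring

lemma rpow_neg_le_of_half_le {p q y : ℝ} (hy : 1 / 2 ≤ y) (hpq : q ≤ p) :
    y ^ (-p) ≤ 2 ^ (p - q) * y ^ (-q) := by
  have hy0 : 0 < y := by linarith
  have h : y ^ (-(p - q)) ≤ (1 / 2 : ℝ) ^ (-(p - q)) :=
    Real.rpow_le_rpow_of_nonpos (by norm_num) hy (by linarith)
  have e : (1 / 2 : ℝ) ^ (-(p - q)) = 2 ^ (p - q) := by
    rw [one_div, Real.inv_rpow (by norm_num), ← Real.rpow_neg (by norm_num), neg_neg]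
  rw [e] at h
  calc y ^ (-p) = y ^ (-(p - q)) * y ^ (-q) := by rw [← Real.rpow_add hy0]; congr 1; ring
    _ ≤ _ := by gcongr

lemma exists_exp_neg_half_le (q : ℝ) :
    ∃ C : ℝ, 0 ≤ C ∧ ∀ y : ℝ, 1 / 2 ≤ y → Real.exp (-(1 / 2) * y) ≤ C * y ^ (-q) := by
  obtain ⟨M, hM⟩ := exists_nat_ge q
  refine ⟨(M.factorial / (1 / 2) ^ M) * 2 ^ (M - q), by positivity, fun y hy => ?_⟩
  have hy0 : 0 < y := by linarith
  have h := pow_mul_exp_neg_le (a := 1 / 2) (by norm_num) hy0.le M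
  calc Real.exp (-(1 / 2) * y) = (y ^ M * Real.exp (-(1 / 2) * y)) * y ^ (-(M : ℝ)) := by
        rw [Real.rpow_neg hy0.le, Real.rpow_natCast]; field_simp
    _ ≤ (M.factorial / (1 / 2) ^ M) * (2 ^ (M - q) * y ^ (-q)) := by
        gcongr
        exact rpow_neg_le_of_half_le hy hM
    _ = _ := by ring

lemma exists_abs_rpowTerm_le {s q : ℝ} {N : ℕ} (h : q ≤ s + N) :
    ∃ C : ℝ, 0 ≤ C ∧ ∀ y : ℝ, 1 / 2 ≤ y → |rpowTerm s N y| ≤ C * y ^ (-q) := by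
  refine ⟨|∏ i ∈ Finset.range N, (s + i)| * 2 ^ (s + N - q), by positivity, fun y hy => ?_⟩
  have hy0 : 0 < y := by linarith
  rw [rpowTerm, abs_mul, abs_of_nonneg (by positivity : 0 ≤ y ^ (-s - (N : ℝ))), mul_assoc,
    show -s - (N : ℝ) = -(s + N) by ring]
  gcongr
  exact rpow_neg_le_of_half_le hy h

lemma exists_abs_mainTerm_le {k N : ℕ} {q : ℝ} (h : q ≤ (k : ℝ) / 2 - 1 + N) :
    ∃ C : ℝ, 0 ≤ C ∧ ∀ y : ℝ, 1 / 2 ≤ y → |mainTerm k N y| ≤ C * y ^ (-q) := by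
  obtain ⟨C₁, h₁, hC₁⟩ := exists_abs_rpowTerm_le (s := (k : ℝ) / 2 + 1) (q := q) (N := N)
    (by linarith)
  obtain ⟨C₂, h₂, hC₂⟩ := exists_abs_rpowTerm_le (s := (k : ℝ) / 2) (q := q) (N := N)
    (by linarith)
  obtain ⟨C₃, h₃, hC₃⟩ := exists_abs_rpowTerm_le (s := (k : ℝ) / 2 - 1) (q := q) (N := N) h
  refine ⟨Real.pi ^ ((k : ℝ) / 2) * (C₁ + 1 / 2 * C₂ + 1 / 12 * C₃), by positivity,
    fun y hy => ?_⟩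
  rw [mainTerm, abs_mul, abs_of_nonneg (by positivity : 0 ≤ Real.pi ^ ((k : ℝ) / 2)), mul_assoc]
  gcongr
  have e₁ := abs_le.1 (hC₁ y hy)
  have e₂ := abs_le.1 (hC₂ y hy)
  have e₃ := abs_le.1 (hC₃ y hy)
  rw [abs_le]
  constructor <;> linarith [e₁.1, e₁.2, e₂.1, e₂.2, e₃.1, e₃.2]

lemma exists_tsum_mul_pow_mul_exp_le {c : ℕ → ℝ} (hc0 : ∀ n, 0 ≤ c n)
    (hc : ∀ x : ℝ, 0 < x → Summable fun n : ℕ => c n * Real.exp (-x * n)) {N : ℕ} (hN : N ≠ 0)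
    (q : ℝ) : ∃ C : ℝ, 0 ≤ C ∧ ∀ y : ℝ, 1 / 2 ≤ y →
      |∑' n : ℕ, c n * (n : ℝ) ^ N * Real.exp (-y * n)| ≤ C * y ^ (-q) := by
  obtain ⟨C, h0, hC⟩ := exists_exp_neg_half_le q
  have hS := summable_mul_pow_mul_exp hc0 hc N (x := 1 / 4) (by norm_num)
  have hnn : ∀ (x : ℝ) (n : ℕ), 0 ≤ c n * (n : ℝ) ^ N * Real.exp (-x * n) := by
    intro x n; have := hc0 n; positivity
  refine ⟨(∑' n : ℕ, c n * (n : ℝ) ^ N * Real.exp (-(1 / 4) * n)) * C,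
    mul_nonneg (tsum_nonneg (hnn _)) h0, fun y hy => ?_⟩
  rw [abs_of_nonneg (tsum_nonneg (hnn _)), mul_assoc]
  refine le_trans ?_ (mul_le_mul_of_nonneg_left (hC y hy) (tsum_nonneg (hnn _)))
  rw [← tsum_mul_right]
  refine (summable_mul_pow_mul_exp hc0 hc N (by linarith)).tsum_le_tsum (fun n => ?_)
    (hS.mul_right _)
  rcases Nat.eq_zero_or_pos n with rfl | hn
  · simp [hN]
  · have hn1 : (1 : ℝ) ≤ n := by exact_mod_cast hn
    have := hc0 n
    rw [mul_assoc _ (Real.exp _) (Real.exp _), ← Real.exp_add]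
    gcongr
    nlinarith

lemma exists_abs_tsum_sub_mainTerm_le_of_pos {k N : ℕ} (hN : N ≠ 0) {q : ℝ}
    (h₁ : q ≤ (k : ℝ) / 2 - 1 + N) (h₂ : (k : ℝ) / 2 - 2 + N ≤ q) :
    ∃ C : ℝ, 0 ≤ C ∧ ∀ y : ℝ, 0 < y →
    |(∑' n : ℕ, (Sk k n : ℝ) * (n : ℝ) ^ N * Real.exp (-y * n)) - mainTerm k N y| ≤
      C * y ^ (-q) := by
  obtain ⟨C₁, hC₁0, hC₁⟩ := exists_abs_tsum_sub_mainTerm_le k N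
  obtain ⟨C₂, hC₂0, hC₂⟩ := exists_tsum_mul_pow_mul_exp_le (c := fun n => (Sk k n : ℝ))
    (fun _ => Nat.cast_nonneg _) (fun _ hx => summable_Sk_mul_exp k hx) hN q
  obtain ⟨C₃, hC₃0, hC₃⟩ := exists_abs_mainTerm_le h₁
  refine ⟨C₁ + C₂ + C₃, by positivity, fun y hy => ?_⟩
  have hq : 0 ≤ y ^ (-q) := by positivity
  rcases le_total y (1 / 2) with hy2 | hy2
  · refine (hC₁ y hy hy2).trans ?_
    have : y ^ (2 - (k : ℝ) / 2 - N) ≤ y ^ (-q) :=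
      Real.rpow_le_rpow_of_exponent_ge hy (by linarith) (by linarith)
    nlinarith [mul_le_mul_of_nonneg_left this hC₁0, mul_nonneg hC₂0 hq, mul_nonneg hC₃0 hq]
  · refine (abs_sub _ _).trans ?_
    nlinarith [hC₂ y hy2, hC₃ y hy2, mul_nonneg hC₁0 hq]

lemma continuousOn_tsum_sub_mainTerm (k N : ℕ) : ContinuousOn (fun y : ℝ =>
    (∑' n : ℕ, (Sk k n : ℝ) * (n : ℝ) ^ N * Real.exp (-y * n)) - mainTerm k N y) (Ioi 0) := by
  have h : ContinuousOn (fun y : ℝ => (-1) ^ N * (seriesError k N y).re) (Ioi 0) := by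
    intro y hy
    refine ContinuousAt.continuousWithinAt ?_
    have h1 := (hasDerivAt_seriesError k N (z := y) (by simpa using hy)).continuousAt
    exact continuousAt_const.mul (Complex.continuous_re.continuousAt.comp
      (ContinuousAt.comp (f := fun y : ℝ => (y : ℂ)) h1 Complex.continuous_ofReal.continuousAt))
  refine h.congr fun y hy => ?_
  simp only
  rw [seriesError_ofReal k N hy, Complex.ofReal_re, ← mul_assoc, ← mul_pow]
  simp

lemma exists_abs_tsum_Sk_sub_le {k : ℕ} (hk : 3 ≤ k) {ε : ℝ} (hε : 0 < ε) (hε1 : ε ≤ 1) :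
    ∃ C : ℝ, 0 ≤ C ∧ ∀ y : ℝ, 0 < y →
      (Summable fun n : ℕ => (Sk k ((n : ℝ) + 1) : ℝ) * ((n : ℝ) + 1) ^ ((k : ℝ) / 2 - 1) *
        Real.exp (-y * ((n : ℝ) + 1))) ∧
      |(∑' n : ℕ, (Sk k ((n : ℝ) + 1) : ℝ) * ((n : ℝ) + 1) ^ ((k : ℝ) / 2 - 1) *
        Real.exp (-y * ((n : ℝ) + 1))) - Real.pi ^ ((k : ℝ) / 2) *
          (Real.Gamma k / Real.Gamma ((k : ℝ) / 2 + 1) * y ^ (-(k : ℝ)) +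
          1 / 2 * (Real.Gamma ((k : ℝ) - 1) / Real.Gamma ((k : ℝ) / 2) * y ^ (-((k : ℝ) - 1))) +
          1 / 12 * (Real.Gamma ((k : ℝ) - 2) / Real.Gamma ((k : ℝ) / 2 - 1) *
            y ^ (-((k : ℝ) - 2))))| ≤ C * y ^ (-((k : ℝ) - 3 + ε)) := by
  have hk3 : (3 : ℝ) ≤ k := by exact_mod_cast hk
  obtain ⟨N, rfl⟩ : ∃ N, k = N + 2 := ⟨k - 2, by omega⟩
  have hN : N ≠ 0 := by omega
  have hNk : (N : ℝ) = ((N + 2 : ℕ) : ℝ) - 2 := by push_cast; ring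
  set K : ℝ := ((N + 2 : ℕ) : ℝ) with hK
  set b : ℝ := K / 2 - 1 with hb_def
  have hb : 0 < b := by linarith
  have hGb := Real.Gamma_pos_of_pos hb
  obtain ⟨C, hC0, hC⟩ := exists_abs_tsum_sub_mainTerm_le_of_pos (k := N + 2) hN
    (q := b + (K - 3 + ε)) (by linarith) (by linarith)
  have hp : 0 < K - 3 + ε := by linarith
  have hGp := Real.Gamma_pos_of_pos hp
  have hGbp := Real.Gamma_pos_of_pos (add_pos hb hp)
  refine ⟨C * (Real.Gamma (K - 3 + ε) / Real.Gamma (b + (K - 3 + ε))), by positivity,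
    fun y hy => ?_⟩
  have hsum := hasSum_mul_rpow_mul_exp (c := fun n => (Sk (N + 2) n : ℝ))
    (fun _ => Nat.cast_nonneg _) (fun _ hx => summable_Sk_mul_exp _ hx) hN hb hy
  have hexp : (N : ℝ) - b = K / 2 - 1 := by linarith
  simp only [hexp, Nat.cast_add_one] at hsum
  set T : ℕ → ℝ := fun n => (Sk (N + 2) ((n : ℝ) + 1) : ℝ) * ((n : ℝ) + 1) ^ (K / 2 - 1) *
        Real.exp (-y * ((n : ℝ) + 1)) with hT
  have hsT : Summable T := (summable_mul_left_iff hGb.ne').1 hsum.summable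
  refine ⟨hsT, ?_⟩
  set D : ℝ → ℝ := fun y => (∑' n : ℕ, (Sk (N + 2) n : ℝ) * (n : ℝ) ^ N * Real.exp (-y * n)) -
    mainTerm (N + 2) N y with hD
  obtain ⟨i1, v1⟩ := integrableOn_and_integral_rpowTerm (s := K / 2 + 1) (N := N) hb
    (by linarith) (by linarith) hy
  obtain ⟨i2, v2⟩ := integrableOn_and_integral_rpowTerm (s := K / 2) (N := N) hb
    (by linarith) (by linarith) hy
  obtain ⟨i3, v3⟩ := integrableOn_and_integral_rpowTerm (s := K / 2 - 1) (N := N) hb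
    (by linarith) (by linarith) hy
  rw [show K / 2 + 1 + N - b = K by linarith] at v1
  rw [show K / 2 + N - b = K - 1 by linarith] at v2
  rw [show K / 2 - 1 + N - b = K - 2 by linarith] at v3
  have em : (fun u : ℝ => u ^ (b - 1) * mainTerm (N + 2) N (y + u)) = fun u : ℝ =>
      Real.pi ^ (K / 2) * (u ^ (b - 1) * rpowTerm (K / 2 + 1) N (y + u) +
      1 / 2 * (u ^ (b - 1) * rpowTerm (K / 2) N (y + u)) +
      1 / 12 * (u ^ (b - 1) * rpowTerm (K / 2 - 1) N (y + u))) := by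
    ext u
    rw [mainTerm]
    ring
  have im : IntegrableOn (fun u : ℝ => u ^ (b - 1) * mainTerm (N + 2) N (y + u)) (Ioi 0) := by
    rw [em]
    exact ((i1.add (i2.const_mul _)).add (i3.const_mul _)).const_mul _
  have vm : ∫ u in Ioi (0 : ℝ), u ^ (b - 1) * mainTerm (N + 2) N (y + u) =
      Real.Gamma b * (Real.pi ^ (K / 2) *
          (Real.Gamma K / Real.Gamma (K / 2 + 1) * y ^ (-K) +
          1 / 2 * (Real.Gamma (K - 1) / Real.Gamma (K / 2) * y ^ (-(K - 1))) +
          1 / 12 * (Real.Gamma (K - 2) / Real.Gamma (K / 2 - 1) * y ^ (-(K - 2))))) := by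
    have i12 : IntegrableOn (fun u : ℝ => u ^ (b - 1) * rpowTerm (K / 2 + 1) N (y + u) +
        1 / 2 * (u ^ (b - 1) * rpowTerm (K / 2) N (y + u))) (Ioi 0) := i1.add (i2.const_mul _)
    rw [em, integral_const_mul, integral_add i12 (i3.const_mul _),
      integral_add i1 (i2.const_mul _), integral_const_mul, integral_const_mul, v1, v2, v3]
    ring
  obtain ⟨iq, vq⟩ := integrableOn_and_integral_rpow_mul_add_rpow hb hp hy
  have hbound : ∀ᵐ u ∂(volume.restrict (Ioi (0 : ℝ))), ‖u ^ (b - 1) * D (y + u)‖ ≤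
      C * (u ^ (b - 1) * (y + u) ^ (-(b + (K - 3 + ε)))) := by
    refine (ae_restrict_iff' measurableSet_Ioi).2 (ae_of_all _ fun u hu => ?_)
    have hu : 0 < u := hu
    have h := hC (y + u) (by positivity)
    rw [norm_mul, Real.norm_of_nonneg (by positivity : 0 ≤ u ^ (b - 1)), Real.norm_eq_abs]
    calc u ^ (b - 1) * |D (y + u)| ≤ u ^ (b - 1) * (C * (y + u) ^ (-(b + (K - 3 + ε)))) := by
          gcongr
      _ = _ := by ring
  have mD : AEStronglyMeasurable (fun u : ℝ => u ^ (b - 1) * D (y + u))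
      (volume.restrict (Ioi 0)) := by
    refine ContinuousOn.aestronglyMeasurable ?_ measurableSet_Ioi
    refine ContinuousOn.mul (fun u hu => ?_) ?_
    · exact (Real.continuousAt_rpow_const _ _ (Or.inl (ne_of_gt hu))).continuousWithinAt
    · exact (continuousOn_tsum_sub_mainTerm (N + 2) N).comp (by fun_prop)
        fun u hu => add_pos hy hu
  have iD : IntegrableOn (fun u : ℝ => u ^ (b - 1) * D (y + u)) (Ioi 0) :=
    (iq.const_mul C).mono' mD hbound
  have nD := norm_integral_le_of_norm_le (iq.const_mul C) hbound
  rw [integral_const_mul, vq] at nD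
  have split : ∫ u in Ioi (0 : ℝ), u ^ (b - 1) *
        ∑' n : ℕ, (Sk (N + 2) n : ℝ) * (n : ℝ) ^ N * Real.exp (-(y + u) * n) =
      (∫ u in Ioi (0 : ℝ), u ^ (b - 1) * D (y + u)) +
        ∫ u in Ioi (0 : ℝ), u ^ (b - 1) * mainTerm (N + 2) N (y + u) := by
    rw [← integral_add iD im]
    congr 1
    ext u
    simp only [hD]
    ring
  have ht := hsum.tsum_eq
  rw [tsum_mul_left, split, vm] at ht
  refine le_of_mul_le_mul_left ?_ hGb
  calc _ = ‖∫ u in Ioi (0 : ℝ), u ^ (b - 1) * D (y + u)‖ := by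
        rw [← abs_of_pos hGb, ← abs_mul, mul_sub, abs_of_pos hGb, ht, add_sub_cancel_right,
          Real.norm_eq_abs]
    _ ≤ _ := nD
    _ = _ := by ring

lemma Sk_zero_left (n : ℕ) : Sk 0 n = 1 := by
  have : ∀ v : Fin 0 → ℤ, ∑ i, ((v i : ℝ)) ^ 2 ≤ (n : ℝ) := fun v => by simp
  simp [Sk]

lemma exists_abs_tsum_pow_sub_le {k : ℕ} (hk : 3 ≤ k) :
    ∃ C : ℝ, 0 ≤ C ∧ ∀ y : ℝ, 0 < y → y ≤ 1 / 2 →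
      (Summable fun n : ℕ => ((n : ℝ) + 1) ^ ((k : ℝ) - 1) * Real.exp (-y * ((n : ℝ) + 1))) ∧
      |(∑' n : ℕ, ((n : ℝ) + 1) ^ ((k : ℝ) - 1) * Real.exp (-y * ((n : ℝ) + 1))) -
        Real.Gamma k * y ^ (-(k : ℝ))| ≤ C * y ^ (-((k : ℝ) - 3)) := by
  obtain ⟨M, rfl⟩ : ∃ M, k = M + 1 := ⟨k - 1, by omega⟩
  obtain ⟨C, hC0, hC⟩ := exists_abs_tsum_sub_mainTerm_le 0 M
  refine ⟨C, hC0, fun y hy hy2 => ?_⟩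
  have h := hC y hy hy2
  have hs := summable_mul_pow_mul_exp (fun _ => Nat.cast_nonneg _)
    (fun _ hx => summable_Sk_mul_exp 0 hx) M hy
  have e : ∀ n : ℕ, (Sk 0 (n + 1 : ℕ) : ℝ) * ((n + 1 : ℕ) : ℝ) ^ M * Real.exp (-y * (n + 1 : ℕ)) =
      ((n : ℝ) + 1) ^ (((M + 1 : ℕ) : ℝ) - 1) * Real.exp (-y * ((n : ℝ) + 1)) := by
    intro n
    rw [Sk_zero_left]
    push_cast
    rw [add_sub_cancel_right, Real.rpow_natCast, one_mul]
  have hm : mainTerm 0 M y = Real.Gamma (M + 1 : ℕ) * y ^ (-((M + 1 : ℕ) : ℝ)) := by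
    have z0 : ∏ i ∈ Finset.range M, ((0 : ℝ) + i) = 0 :=
      Finset.prod_eq_zero (Finset.mem_range.2 (by omega : 0 < M)) (by simp)
    have z1 : ∏ i ∈ Finset.range M, ((0 : ℝ) - 1 + i) = 0 :=
      Finset.prod_eq_zero (Finset.mem_range.2 (by omega : 1 < M)) (by simp)
    have z2 := prod_range_eq_Gamma_div one_pos M
    rw [mainTerm, rpowTerm, rpowTerm, rpowTerm]
    simp only [CharP.cast_eq_zero, zero_div, z0, z1]
    simp only [zero_add, z2]
    rw [Real.Gamma_one, Real.rpow_zero]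
    push_cast
    rw [show -1 - (M : ℝ) = -(M + 1) by ring, add_comm 1 (M : ℝ)]
    ring
  have hM0 : M ≠ 0 := by omega
  rw [hs.tsum_eq_zero_add, hm, Nat.cast_zero, zero_pow hM0, mul_zero, zero_mul, zero_add] at h
  have hs' := (summable_nat_add_iff 1).2 hs
  simp only [e] at h hs'
  refine ⟨hs', h.trans (le_of_eq ?_)⟩
  congr 2
  push_cast
  ring

/-- smoothed first moment of `P_k(n) n^{k/2−1}`. -/
theorem smoothed_first_moment (k : ℕ) (hk : 3 ≤ k) :
    ∀ ε : ℝ, 0 < ε → ∃ A : ℝ, 0 < A ∧ ∀ X : ℝ, 2 ≤ X →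
      Summable (fun n : ℕ =>
        |Pk k ((n : ℝ) + 1) * ((n : ℝ) + 1) ^ ((k : ℝ) / 2 - 1)
          * Real.exp (-((n : ℝ) + 1) / X)|) ∧
      |(∑' n : ℕ, Pk k ((n : ℝ) + 1) * ((n : ℝ) + 1) ^ ((k : ℝ) / 2 - 1)
            * Real.exp (-((n : ℝ) + 1) / X))
          - (Real.pi ^ ((k : ℝ) / 2) * Real.Gamma ((k : ℝ) - 1)
              / (2 * Real.Gamma ((k : ℝ) / 2))) * X ^ ((k : ℝ) - 1)
          - (Real.pi ^ ((k : ℝ) / 2) * Real.Gamma ((k : ℝ) - 2)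
              / (12 * Real.Gamma ((k : ℝ) / 2 - 1))) * X ^ ((k : ℝ) - 2)|
        ≤ A * X ^ ((k : ℝ) - 3 + ε) := by
  intro ε hε
  have hk3 : (3 : ℝ) ≤ k := by exact_mod_cast hk
  obtain ⟨C₁, hC₁0, h₁⟩ := exists_abs_tsum_Sk_sub_le hk (ε := min ε 1) (by positivity)
    (min_le_right _ _)
  obtain ⟨C₂, hC₂0, h₂⟩ := exists_abs_tsum_pow_sub_le hk
  have hV : 0 ≤ Vk k := by
    have := Real.Gamma_pos_of_pos (by positivity : 0 < (k : ℝ) / 2 + 1)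
    rw [Vk]; positivity
  refine ⟨C₁ + Vk k * C₂ + 1, by positivity, fun X hX => ?_⟩
  have hX0 : 0 < X := by linarith
  have hy0 : 0 < X⁻¹ := by positivity
  have hyp : ∀ p : ℝ, X⁻¹ ^ (-p) = X ^ p := fun p => by
    rw [Real.inv_rpow hX0.le, ← Real.rpow_neg hX0.le, neg_neg]
  obtain ⟨s₁, b₁⟩ := h₁ X⁻¹ hy0
  obtain ⟨s₂, b₂⟩ := h₂ X⁻¹ hy0 (by
    rw [one_div]; exact inv_anti₀ (by norm_num) hX)
  simp only [hyp] at b₁ b₂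
  have e : ∀ n : ℕ, Pk k ((n : ℝ) + 1) * ((n : ℝ) + 1) ^ ((k : ℝ) / 2 - 1)
          * Real.exp (-((n : ℝ) + 1) / X) =
      (Sk k ((n : ℝ) + 1) : ℝ) * ((n : ℝ) + 1) ^ ((k : ℝ) / 2 - 1) *
        Real.exp (-X⁻¹ * ((n : ℝ) + 1)) -
      Vk k * (((n : ℝ) + 1) ^ ((k : ℝ) - 1) * Real.exp (-X⁻¹ * ((n : ℝ) + 1))) := by
    intro n
    have hn : (0 : ℝ) < (n : ℝ) + 1 := by positivity
    rw [Pk, show (k : ℝ) - 1 = (k : ℝ) / 2 + ((k : ℝ) / 2 - 1) by ring, Real.rpow_add hn,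
      show -((n : ℝ) + 1) / X = -X⁻¹ * ((n : ℝ) + 1) by field_simp]
    ring
  simp only [e]
  refine ⟨(s₁.sub (s₂.mul_left _)).abs, ?_⟩
  rw [s₁.tsum_sub (s₂.mul_left _), tsum_mul_left]
  set T₁ := ∑' n : ℕ, (Sk k ((n : ℝ) + 1) : ℝ) * ((n : ℝ) + 1) ^ ((k : ℝ) / 2 - 1) *
        Real.exp (-X⁻¹ * ((n : ℝ) + 1))
  set T₂ := ∑' n : ℕ, ((n : ℝ) + 1) ^ ((k : ℝ) - 1) * Real.exp (-X⁻¹ * ((n : ℝ) + 1))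
  have p₁ : X ^ ((k : ℝ) - 3 + min ε 1) ≤ X ^ ((k : ℝ) - 3 + ε) :=
    Real.rpow_le_rpow_of_exponent_le (by linarith) (by linarith [min_le_left ε 1])
  have p₂ : X ^ ((k : ℝ) - 3) ≤ X ^ ((k : ℝ) - 3 + ε) :=
    Real.rpow_le_rpow_of_exponent_le (by linarith) (by linarith)
  have b₁' := b₁.trans (mul_le_mul_of_nonneg_left p₁ hC₁0)
  have b₂' := mul_le_mul_of_nonneg_left (b₂.trans (mul_le_mul_of_nonneg_left p₂ hC₂0)) hV
  rw [← abs_of_nonneg hV, ← abs_mul, abs_of_nonneg hV] at b₂'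
  calc _ = |(T₁ - Real.pi ^ ((k : ℝ) / 2) *
          (Real.Gamma k / Real.Gamma ((k : ℝ) / 2 + 1) * X ^ (k : ℝ) +
          1 / 2 * (Real.Gamma ((k : ℝ) - 1) / Real.Gamma ((k : ℝ) / 2) * X ^ ((k : ℝ) - 1)) +
          1 / 12 * (Real.Gamma ((k : ℝ) - 2) / Real.Gamma ((k : ℝ) / 2 - 1) *
            X ^ ((k : ℝ) - 2)))) - Vk k * (T₂ - Real.Gamma k * X ^ (k : ℝ))| := by
        congr 1
        rw [Vk]
        ring
    _ ≤ C₁ * X ^ ((k : ℝ) - 3 + ε) + Vk k * (C₂ * X ^ ((k : ℝ) - 3 + ε)) :=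
        (abs_sub _ _).trans (add_le_add b₁' b₂')
    _ ≤ _ := by
        have : 0 ≤ X ^ ((k : ℝ) - 3 + ε) := by positivity
        linarith
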